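/- arXiv:2012.06901 — 3 statements merged into one kernel-verified Lean document; each statement's English description precedes it below -/
import Mathlib

section
/- Let π_p, C, n_p, n_u be real numbers with 0 < π_p < 1, C > 0, n_p > 0, n_u > 0, and (√C + 1)·π_p < 1. Then the inequality π_p/√n_p + 1/√n_u ≤ (1 − π_p)/√(C·n_p) holds if and only if n_u ≥ C·n_p/(1 − (√C + 1)·π_p)². (This is the condition under which the estimation error bound of PU learning, with n_p positive and n_u unlabeled samples, is tighter than that of PN learning with n_n = C·n_p negative samples, i.e., the condition π_p/√n_p + 1/√n_u ≤ (1 − π_p)/√n_n.) -/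
open Real

theorem div_add_div_le_div_mul_iff {K : Type*} [Field K] [LinearOrder K] [IsStrictOrderedRing K]
    {a b c : K} (p q r : K) (ha : 0 < a) (hb : 0 < b) (hc : 0 < c) :
    p / a + r / b ≤ q / (c * a) ↔ r * (c * a) ≤ (q - c * p) * b := by
  have sub_eq : q / (c * a) - p / a = (q - c * p) / (c * a) := by
    field_simp
  rw [← le_sub_iff_add_le', sub_eq, div_le_div_iff₀ hb (mul_pos hc ha)]

theorem le_mul_sqrt_iff {x : ℝ} (hx : 0 < x) (d y : ℝ) :
    x ≤ d * √y ↔ 0 < d ∧ (x / d) ^ 2 ≤ y := by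
  have pos_of_le (h : x ≤ d * √y) : 0 < d :=
    pos_of_mul_pos_left (hx.trans_le h) (sqrt_nonneg y)
  rw [← and_iff_right_of_imp pos_of_le]
  refine and_congr_right fun hd ↦ ?_
  rw [← div_le_iff₀' hd, le_sqrt' (div_pos hx hd)]

theorem pu_sampling_bound_general (πp : ℝ) {C np nu : ℝ}
    (hC : 0 < C) (hnp : 0 < np) (hnu : 0 < nu) :
    πp / √np + 1 / √nu ≤ (1 - πp) / √(C * np) ↔
      (√C + 1) * πp < 1 ∧ C * np / (1 - (√C + 1) * πp) ^ 2 ≤ nu := by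
  have hCnp : 0 < C * np := mul_pos hC hnp
  have gap_eq : 1 - πp - √C * πp = 1 - (√C + 1) * πp := by ring
  calc πp / √np + 1 / √nu ≤ (1 - πp) / √(C * np)
    _ ↔ √(C * np) ≤ (1 - (√C + 1) * πp) * √nu := by
      rw [sqrt_mul hC.le, div_add_div_le_div_mul_iff _ _ _ (sqrt_pos.2 hnp) (sqrt_pos.2 hnu)
        (sqrt_pos.2 hC), one_mul, gap_eq]
    _ ↔ (√C + 1) * πp < 1 ∧ C * np / (1 - (√C + 1) * πp) ^ 2 ≤ nu := by
      rw [le_mul_sqrt_iff (sqrt_pos.2 hCnp), sub_pos, div_pow, sq_sqrt hCnp.le]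

theorem pu_sampling_bound (πp C np nu : ℝ)
    (hπ0 : 0 < πp) (hπ1 : πp < 1) (hC : 0 < C) (hnp : 0 < np) (hnu : 0 < nu)
    (hcond : (Real.sqrt C + 1) * πp < 1) :
    πp / Real.sqrt np + 1 / Real.sqrt nu ≤ (1 - πp) / Real.sqrt (C * np) ↔
      nu ≥ C * np / (1 - (Real.sqrt C + 1) * πp) ^ 2 :=
  (pu_sampling_bound_general πp hC hnp hnu).trans (and_iff_right hcond)
end

section
/- Let (X, μ) be a measure space and fix a positive class prior π_p ∈ (0,1). Let p_p, p_n, p_g : X → ℝ be nonnegative measurable functions with ∫ p_p dμ = ∫ p_n dμ = ∫ p_g dμ = 1 and with, for μ-a.e. x, p_p(x) > 0 and (1 − π_p)·p_n(x) + p_g(x) > 0. Define p_u := π_p·p_p + (1 − π_p)·p_n and D*(x) := π_p·p_p(x)/(p_u(x) + p_g(x)). Assume the functions x ↦ p_p(x)·log(p_p(x)/((p_u(x)+p_g(x))/2)) and x ↦ (((1 − π_p)·p_n(x) + p_g(x))/(2 − π_p))·log((((1 − π_p)·p_n(x) + p_g(x))/(2 − π_p))/((p_u(x)+p_g(x))/2))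 are μ-integrable. Then V(D*) = −2·H(π_p/2) + π_p·KL(p_p ‖ (p_u + p_g)/2) + (2 − π_p)·KL(((1 − π_p)·p_n + p_g)/(2 − π_p) ‖ (p_u + p_g)/2), where V(D*) := ∫_X [π_p·p_p(x)·log(D*(x)) + ((1 − π_p)·p_n(x) + p_g(x))·log(1 − D*(x))] dμ(x) and KL(f ‖ g) := ∫_X f(x)·log(f(x)/g(x)) dμ(x). (Optimality of the generator: with the optimal discriminator fixed, the generator objective equals this KL decomposition.) -/
open MeasureTheory Real

/-! The two summands of the objective are the classes of a two-class mixture with weights `a = πp`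
and `b = 2 - πp`, densities `f = pp` and `g = ((1 - πp) pn + pg) / (2 - πp)`, whose posterior
`a f / (a f + b g)` is the optimal discriminator. With `m = a f + b g` and `c = a + b`, the identity
`log (a f / m) = log (f / (m / c)) + log (a / c)` splits the objective pointwise into the
relative-entropy integrands against `m / c` and constant multiples of the densities; the latter
integrate to `-c H(a / c)`. The convention `0 * log 0 = 0` covers the points where a density
vanishes. -/

lemma mul_log_mul_div_eq {w p m c : ℝ} (hc : c ≠ 0) (hm : w * p ≠ 0 → m ≠ 0) :
    w * p * log (w * p / m) = w * (p * log (p / (m / c))) + w * log (w / c) * p := by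
  rcases eq_or_ne (w * p) 0 with hwp | hwp
  · rcases mul_eq_zero.mp hwp with rfl | rfl <;> simp
  · obtain ⟨hw, hp⟩ := mul_ne_zero_iff.mp hwp
    have hm0 : m ≠ 0 := hm hwp
    have hfactor : w * p / m = p / (m / c) * (w / c) := by field_simp
    rw [hfactor, log_mul (by positivity) (by positivity)]
    ring

lemma mul_log_one_sub_div_add {u v : ℝ} (hu : 0 ≤ u) (hv : 0 ≤ v) :
    v * log (1 - u / (u + v)) = v * log (v / (u + v)) := by
  rcases hv.eq_or_lt with rfl | hv
  · simp
  · rw [one_sub_div (by positivity), add_sub_cancel_left]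

lemma mul_log_posterior_add_mul_log_one_sub_posterior {a b p q : ℝ} (ha : 0 ≤ a) (hb : 0 ≤ b)
    (hab : 0 < a + b) (hp : 0 ≤ p) (hq : 0 ≤ q) :
    a * p * log (a * p / (a * p + b * q)) + b * q * log (1 - a * p / (a * p + b * q)) =
      (a * (p * log (p / ((a * p + b * q) / (a + b)))) +
        b * (q * log (q / ((a * p + b * q) / (a + b))))) +
      (a * log (a / (a + b)) * p + b * log (b / (a + b)) * q) := by
  have hap : 0 ≤ a * p := mul_nonneg ha hp
  have hbq : 0 ≤ b * q := mul_nonneg hb hq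
  rw [mul_log_one_sub_div_add hap hbq,
    mul_log_mul_div_eq hab.ne' fun h ↦ (add_pos_of_pos_of_nonneg (hap.lt_of_ne' h) hbq).ne',
    mul_log_mul_div_eq hab.ne' fun h ↦ (add_pos_of_nonneg_of_pos hap (hbq.lt_of_ne' h)).ne']
  ring

lemma add_mul_binEntropy_div_add {a b : ℝ} (hab : a + b ≠ 0) :
    (a + b) * binEntropy (a / (a + b)) = -(a * log (a / (a + b)) + b * log (b / (a + b))) := by
  have hcompl : 1 - a / (a + b) = b / (a + b) := by rw [one_sub_div hab, add_sub_cancel_left]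
  rw [binEntropy_eq_negMulLog_add_negMulLog_one_sub, hcompl, negMulLog, negMulLog]
  field_simp
  ring

section

variable {X : Type*} [MeasurableSpace X] {μ : Measure X}

theorem integral_log_posterior_eq_neg_binEntropy_add_relEntropy {a b : ℝ} (ha : 0 ≤ a) (hb : 0 ≤ b)
    (hab : 0 < a + b) {f g : X → ℝ} (hf0 : 0 ≤ᵐ[μ] f) (hg0 : 0 ≤ᵐ[μ] g)
    (hf1 : ∫ x, f x ∂μ = 1) (hg1 : ∫ x, g x ∂μ = 1)
    (hfint : Integrable (fun x ↦ f x * log (f x / ((a * f x + b * g x) / (a + b)))) μ)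
    (hgint : Integrable (fun x ↦ g x * log (g x / ((a * f x + b * g x) / (a + b)))) μ) :
    ∫ x, (a * f x * log (a * f x / (a * f x + b * g x)) +
        b * g x * log (1 - a * f x / (a * f x + b * g x))) ∂μ =
      -(a + b) * binEntropy (a / (a + b)) +
        a * ∫ x, f x * log (f x / ((a * f x + b * g x) / (a + b))) ∂μ +
        b * ∫ x, g x * log (g x / ((a * f x + b * g x) / (a + b))) ∂μ := by
  have hf : Integrable f μ := .of_integral_ne_zero (by simp [hf1])
  have hg : Integrable g μ := .of_integral_ne_zero (by simp [hg1])
  have hsplit := hf0.mp <| hg0.mono fun x hgx hfx ↦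
    mul_log_posterior_add_mul_log_one_sub_posterior ha hb hab hfx hgx
  rw [integral_congr_ae hsplit,
    integral_add ((hfint.const_mul a).fun_add (hgint.const_mul b))
      ((hf.const_mul _).fun_add (hg.const_mul _)),
    integral_add (hfint.const_mul a) (hgint.const_mul b),
    integral_add (hf.const_mul _) (hg.const_mul _)]
  simp only [integral_const_mul, hf1, hg1, neg_mul, add_mul_binEntropy_div_add hab.ne']
  ring

theorem optimal_generator_kl_decomposition_general {πp : ℝ} (hπ0 : 0 ≤ πp) (hπ1 : πp ≤ 1)
    {pp pn pg : X → ℝ} (hpp0 : 0 ≤ᵐ[μ] pp) (hpn0 : 0 ≤ᵐ[μ] pn) (hpg0 : 0 ≤ᵐ[μ] pg)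
    (hppint : ∫ x, pp x ∂μ = 1) (hpnint : ∫ x, pn x ∂μ = 1) (hpgint : ∫ x, pg x ∂μ = 1)
    {pu : X → ℝ} (hpu : pu = fun x ↦ πp * pp x + (1 - πp) * pn x)
    {Dstar : X → ℝ} (hDstar : Dstar = fun x ↦ πp * pp x / (pu x + pg x))
    (hint1 : Integrable (fun x ↦ pp x * log (pp x / ((pu x + pg x) / 2))) μ)
    (hint2 : Integrable (fun x ↦ (((1 - πp) * pn x + pg x) / (2 - πp)) *
      log ((((1 - πp) * pn x + pg x) / (2 - πp)) / ((pu x + pg x) / 2))) μ) :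
    ∫ x, (πp * pp x * log (Dstar x) + ((1 - πp) * pn x + pg x) * log (1 - Dstar x)) ∂μ =
      -2 * binEntropy (πp / 2) +
        πp * ∫ x, pp x * log (pp x / ((pu x + pg x) / 2)) ∂μ +
        (2 - πp) * ∫ x, (((1 - πp) * pn x + pg x) / (2 - πp)) *
          log ((((1 - πp) * pn x + pg x) / (2 - πp)) / ((pu x + pg x) / 2)) ∂μ := by
  subst hpu hDstar
  have hπ2 : 0 < 2 - πp := by linarith
  have hpn : Integrable pn μ := .of_integral_ne_zero (by simp [hpnint])
  have hpg : Integrable pg μ := .of_integral_ne_zero (by simp [hpgint])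
  have hneg0 : ∀ᵐ x ∂μ, 0 ≤ ((1 - πp) * pn x + pg x) / (2 - πp) := by
    filter_upwards [hpn0, hpg0] with x hpnx hpgx
    exact div_nonneg (add_nonneg (mul_nonneg (sub_nonneg.mpr hπ1) hpnx) hpgx) hπ2.le
  have hneg1 : ∫ x, ((1 - πp) * pn x + pg x) / (2 - πp) ∂μ = 1 := by
    rw [integral_div, integral_add (hpn.const_mul _) hpg, integral_const_mul, hpnint, hpgint]
    field_simp
    ring
  have hmixture := integral_log_posterior_eq_neg_binEntropy_add_relEntropy
    hπ0 hπ2.le (by linarith) hpp0 hneg0 hppint hneg1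
  simp only [mul_div_cancel₀ _ hπ2.ne', add_sub_cancel, ← add_assoc] at hmixture
  exact hmixture hint1 hint2

end

theorem optimal_generator_kl_decomposition {X : Type*} [MeasurableSpace X] (μ : Measure X)
    (πp : ℝ) (hπ0 : 0 < πp) (hπ1 : πp < 1)
    (pp pn pg : X → ℝ)
    (hppm : Measurable pp) (hpnm : Measurable pn) (hpgm : Measurable pg)
    (hpp0 : ∀ x, 0 ≤ pp x) (hpn0 : ∀ x, 0 ≤ pn x) (hpg0 : ∀ x, 0 ≤ pg x)
    (hppint : ∫ x, pp x ∂μ = 1) (hpnint : ∫ x, pn x ∂μ = 1) (hpgint : ∫ x, pg x ∂μ = 1)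
    (hae : ∀ᵐ x ∂μ, 0 < pp x ∧ 0 < (1 - πp) * pn x + pg x)
    (pu : X → ℝ) (hpu : pu = fun x => πp * pp x + (1 - πp) * pn x)
    (Dstar : X → ℝ) (hDstar : Dstar = fun x => πp * pp x / (pu x + pg x))
    (hint1 : Integrable (fun x =>
      pp x * Real.log (pp x / ((pu x + pg x) / 2))) μ)
    (hint2 : Integrable (fun x =>
      (((1 - πp) * pn x + pg x) / (2 - πp)) *
        Real.log ((((1 - πp) * pn x + pg x) / (2 - πp)) / ((pu x + pg x) / 2))) μ) :
    ∫ x, (πp * pp x * Real.log (Dstar x) +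
        ((1 - πp) * pn x + pg x) * Real.log (1 - Dstar x)) ∂μ =
      -2 * Real.binEntropy (πp / 2) +
        πp * ∫ x, pp x * Real.log (pp x / ((pu x + pg x) / 2)) ∂μ +
        (2 - πp) * ∫ x, (((1 - πp) * pn x + pg x) / (2 - πp)) *
          Real.log ((((1 - πp) * pn x + pg x) / (2 - πp)) / ((pu x + pg x) / 2)) ∂μ := by
  exact optimal_generator_kl_decomposition_general hπ0.le hπ1.le (.of_forall hpp0)
    (.of_forall hpn0) (.of_forall hpg0) hppint hpnint hpgint hpu hDstar hint1 hint2
end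

section
/- Let (X, μ) be a measure space and fix a positive class prior π_p ∈ (0,1). Let p_p, p_n, p_g : X → ℝ be nonnegative measurable functions with ∫ p_p dμ = ∫ p_n dμ = ∫ p_g dμ = 1 and with, for μ-a.e. x, p_p(x) > 0 and (1 − π_p)·p_n(x) + p_g(x) > 0. Define p_u := π_p·p_p + (1 − π_p)·p_n and D*(x) := π_p·p_p(x)/(p_u(x) + p_g(x)). Assume the functions x ↦ p_p(x)·log(p_p(x)/((p_u(x)+p_g(x))/2)) and x ↦ (((1 − π_p)·p_n(x) + p_g(x))/(2 − π_p))·log((((1 − π_p)·p_n(x) + p_g(x))/(2 − π_p))/((p_u(x)+p_g(x))/2)) are μ-integrable. Then V(D*) ≥ −2·H(π_p/2), where V(D*) := ∫_X [π_p·p_p(x)·log(D*(x)) + ((1 − π_p)·p_n(x) + p_g(x))·log(1 − D*(x))] dμ(x). (The value of the minimax objective at the optimal discriminator is bounded below by −2·H(π_p/2).) -/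
open MeasureTheory Real

/-!
Write `a = πp · pp` for the positive part and `b = (1 - πp) · pn + pg` for the rest, so that
`a + b = pu + pg` and `D* = a / (a + b)`. Pointwise, the integrand of the value at `D*` is
`-(a + b) · H(D*)`. The binary entropy `H` is bounded on `[0, 1]`, so this is integrable, and it is
concave, so Jensen's inequality for the measure `(a + b) μ`, of total mass `2`, bounds the average
of `H(D*)` by `H` at the average of `D*`, which is `πp / 2`.
-/

section WeightedJensen

variable {α E : Type*} [MeasurableSpace α] {μ : Measure α} [NormedAddCommGroup E] [NormedSpace ℝ E]
  {w : α → ℝ}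

theorem ofReal_toReal_smul_ae_eq (hw₀ : 0 ≤ᵐ[μ] w) (f : α → E) :
    (fun x => (ENNReal.ofReal (w x)).toReal • f x) =ᵐ[μ] fun x => w x • f x := by
  filter_upwards [hw₀] with x hx
  rw [ENNReal.toReal_ofReal hx]

theorem integral_withDensity_ofReal (hw : AEMeasurable w μ) (hw₀ : 0 ≤ᵐ[μ] w) (f : α → E) :
    ∫ x, f x ∂μ.withDensity (fun x => ENNReal.ofReal (w x)) = ∫ x, w x • f x ∂μ := by
  rw [integral_withDensity_eq_integral_toReal_smul₀ hw.ennreal_ofReal (by simp),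
    integral_congr_ae (ofReal_toReal_smul_ae_eq hw₀ f)]

theorem integrable_withDensity_ofReal_iff (hw : AEMeasurable w μ) (hw₀ : 0 ≤ᵐ[μ] w) {f : α → E} :
    Integrable f (μ.withDensity fun x => ENNReal.ofReal (w x)) ↔
      Integrable (fun x => w x • f x) μ := by
  rw [integrable_withDensity_iff_integrable_smul₀' hw.ennreal_ofReal (by simp),
    integrable_congr (ofReal_toReal_smul_ae_eq hw₀ f)]

theorem measureReal_univ_withDensity_ofReal (hw : AEMeasurable w μ) (hw₀ : 0 ≤ᵐ[μ] w) :
    (μ.withDensity fun x => ENNReal.ofReal (w x)).real Set.univ = ∫ x, w x ∂μ := by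
  simpa using integral_withDensity_ofReal hw hw₀ fun _ => (1 : ℝ)

theorem integral_mul_comp_le_mul_of_concaveOn [CompleteSpace E] {s : Set E} {f : α → E} {g : E → ℝ}
    (hg : ConcaveOn ℝ s g) (hgc : ContinuousOn g s) (hs : IsClosed s)
    (hw : Integrable w μ) (hw₀ : 0 ≤ᵐ[μ] w) (hw_pos : 0 < ∫ x, w x ∂μ)
    (hfs : ∀ᵐ x ∂μ, f x ∈ s) (hf : Integrable (fun x => w x • f x) μ)
    (hgf : Integrable (fun x => w x * g (f x)) μ) :
    ∫ x, w x * g (f x) ∂μ ≤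
      (∫ x, w x ∂μ) * g ((∫ x, w x ∂μ)⁻¹ • ∫ x, w x • f x ∂μ) := by
  set ν := μ.withDensity fun x => ENNReal.ofReal (w x) with hν
  have hmass : ν.real Set.univ = ∫ x, w x ∂μ :=
    measureReal_univ_withDensity_ofReal hw.aemeasurable hw₀
  have : IsFiniteMeasure ν := isFiniteMeasure_withDensity_ofReal hw.2
  have : NeZero ν := ⟨fun h => hw_pos.ne' (by rw [← hmass, h]; simp)⟩
  have hjensen : ⨍ x, g (f x) ∂ν ≤ g (⨍ x, f x ∂ν) :=
    hg.le_map_average hgc hs (withDensity_absolutelyContinuous μ _ |>.ae_le hfs)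
      ((integrable_withDensity_ofReal_iff hw.aemeasurable hw₀).2 hf)
      ((integrable_withDensity_ofReal_iff hw.aemeasurable hw₀).2 hgf)
  rw [average_eq, average_eq, hmass, hν, integral_withDensity_ofReal hw.aemeasurable hw₀,
    integral_withDensity_ofReal hw.aemeasurable hw₀, smul_eq_mul] at hjensen
  exact (inv_mul_le_iff₀ hw_pos).1 hjensen

end WeightedJensen

section BinaryEntropy

variable {α : Type*} [MeasurableSpace α] {μ : Measure α}

theorem integrable_mul_binEntropy {w q : α → ℝ} (hw : Integrable w μ)
    (hq : AEStronglyMeasurable q μ) (hq01 : ∀ᵐ x ∂μ, q x ∈ Set.Icc 0 1) :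
    Integrable (fun x => w x * binEntropy (q x)) μ := by
  refine hw.mul_bdd (c := log 2) (binEntropy_continuous.comp_aestronglyMeasurable hq) ?_
  filter_upwards [hq01] with x hx
  rw [norm_of_nonneg (binEntropy_nonneg hx.1 hx.2)]
  exact binEntropy_le_log_two

theorem integral_mul_binEntropy_le {w q : α → ℝ} (hw : Integrable w μ) (hw₀ : 0 ≤ᵐ[μ] w)
    (hw_pos : 0 < ∫ x, w x ∂μ) (hq : AEStronglyMeasurable q μ)
    (hq01 : ∀ᵐ x ∂μ, q x ∈ Set.Icc 0 1) :
    ∫ x, w x * binEntropy (q x) ∂μ ≤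
      (∫ x, w x ∂μ) * binEntropy ((∫ x, w x * q x ∂μ) / ∫ x, w x ∂μ) := by
  have hwq : Integrable (fun x => w x * q x) μ := by
    refine hw.mul_bdd (c := 1) hq ?_
    filter_upwards [hq01] with x hx
    rw [norm_of_nonneg hx.1]
    exact hx.2
  simpa only [smul_eq_mul, inv_mul_eq_div] using
    integral_mul_comp_le_mul_of_concaveOn strictConcave_binEntropy.concaveOn
      binEntropy_continuous.continuousOn isClosed_Icc hw hw₀ hw_pos hq01 hwq
      (integrable_mul_binEntropy hw hq hq01)

theorem add_mul_div_add_cancel {a b : ℝ} (ha : 0 ≤ a) (hb : 0 ≤ b) :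
    (a + b) * (a / (a + b)) = a :=
  mul_div_cancel_of_imp' fun h => ((add_eq_zero_iff_of_nonneg ha hb).1 h).1

theorem mul_log_add_mul_log_one_sub_eq_neg_binEntropy {a b : ℝ} (ha : 0 ≤ a) (hb : 0 ≤ b) :
    a * log (a / (a + b)) + b * log (1 - a / (a + b)) =
      -((a + b) * binEntropy (a / (a + b))) := by
  have hq := add_mul_div_add_cancel ha hb
  set q := a / (a + b)
  rw [binEntropy, log_inv, log_inv]
  linear_combination (log (1 - q) - log q) * hq

variable {a b : α → ℝ}

theorem aestronglyMeasurable_div_add (ha : AEMeasurable a μ) (hb : AEMeasurable b μ) :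
    AEStronglyMeasurable (fun x => a x / (a x + b x)) μ :=
  (ha.div (ha.add hb)).aestronglyMeasurable

theorem ae_div_add_mem_Icc (ha₀ : 0 ≤ᵐ[μ] a) (hb₀ : 0 ≤ᵐ[μ] b) :
    ∀ᵐ x ∂μ, a x / (a x + b x) ∈ Set.Icc 0 1 := by
  filter_upwards [ha₀, hb₀] with x (hax : 0 ≤ a x) (hbx : 0 ≤ b x)
  exact ⟨by positivity, div_le_one_of_le₀ (le_add_of_nonneg_right hbx) (by positivity)⟩

theorem integrable_mul_log_add_mul_log_one_sub (ha : Integrable a μ) (hb : Integrable b μ)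
    (ha₀ : 0 ≤ᵐ[μ] a) (hb₀ : 0 ≤ᵐ[μ] b) :
    Integrable (fun x => a x * log (a x / (a x + b x)) +
      b x * log (1 - a x / (a x + b x))) μ := by
  have hentropy : Integrable (fun x => (a x + b x) * binEntropy (a x / (a x + b x))) μ :=
    integrable_mul_binEntropy (ha.add hb)
      (aestronglyMeasurable_div_add ha.aemeasurable hb.aemeasurable)
      (ae_div_add_mem_Icc ha₀ hb₀)
  refine hentropy.neg.congr ?_
  filter_upwards [ha₀, hb₀] with x hax hbx
  exact (mul_log_add_mul_log_one_sub_eq_neg_binEntropy hax hbx).symm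

theorem neg_mul_binEntropy_le_integral_mul_log_add (ha : Integrable a μ) (hb : Integrable b μ)
    (ha₀ : 0 ≤ᵐ[μ] a) (hb₀ : 0 ≤ᵐ[μ] b) (hpos : 0 < ∫ x, a x ∂μ + ∫ x, b x ∂μ) :
    -((∫ x, a x ∂μ + ∫ x, b x ∂μ) *
        binEntropy ((∫ x, a x ∂μ) / (∫ x, a x ∂μ + ∫ x, b x ∂μ))) ≤
      ∫ x, (a x * log (a x / (a x + b x)) + b x * log (1 - a x / (a x + b x))) ∂μ := by
  have hab₀ : 0 ≤ᵐ[μ] a + b := by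
    filter_upwards [ha₀, hb₀] with x using add_nonneg
  have hmass : ∫ x, (a x + b x) ∂μ = ∫ x, a x ∂μ + ∫ x, b x ∂μ := integral_add ha hb
  have hmean : ∫ x, (a x + b x) * (a x / (a x + b x)) ∂μ = ∫ x, a x ∂μ := by
    refine integral_congr_ae ?_
    filter_upwards [ha₀, hb₀] with x using add_mul_div_add_cancel
  have hvalue : ∫ x, (a x * log (a x / (a x + b x)) + b x * log (1 - a x / (a x + b x))) ∂μ =
      -∫ x, (a x + b x) * binEntropy (a x / (a x + b x)) ∂μ := by
    rw [← integral_neg]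
    refine integral_congr_ae ?_
    filter_upwards [ha₀, hb₀] with x using mul_log_add_mul_log_one_sub_eq_neg_binEntropy
  have hjensen := integral_mul_binEntropy_le (ha.add hb) hab₀ (hmass ▸ hpos)
    (aestronglyMeasurable_div_add ha.aemeasurable hb.aemeasurable) (ae_div_add_mem_Icc ha₀ hb₀)
  simp only [Pi.add_apply, hmass, hmean] at hjensen
  rw [hvalue]
  exact neg_le_neg hjensen

end BinaryEntropy

theorem minimax_value_lower_bound_general {X : Type*} [MeasurableSpace X] {μ : Measure X}
    {πp : ℝ} (hπ : πp ∈ Set.Icc 0 1) {pp pn pg : X → ℝ}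
    (hpp0 : 0 ≤ᵐ[μ] pp) (hpn0 : 0 ≤ᵐ[μ] pn) (hpg0 : 0 ≤ᵐ[μ] pg)
    (hppint : ∫ x, pp x ∂μ = 1) (hpnint : ∫ x, pn x ∂μ = 1) (hpgint : ∫ x, pg x ∂μ = 1)
    {pu : X → ℝ} (hpu : pu = fun x => πp * pp x + (1 - πp) * pn x)
    {Dstar : X → ℝ} (hDstar : Dstar = fun x => πp * pp x / (pu x + pg x)) :
    Integrable (fun x => πp * pp x * log (Dstar x) +
        ((1 - πp) * pn x + pg x) * log (1 - Dstar x)) μ ∧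
      -2 * binEntropy (πp / 2) ≤ ∫ x, (πp * pp x * log (Dstar x) +
        ((1 - πp) * pn x + pg x) * log (1 - Dstar x)) ∂μ := by
  have hpn : Integrable (fun x => (1 - πp) * pn x) μ :=
    (integrable_of_integral_eq_one hpnint).const_mul _
  have hpg : Integrable pg μ := integrable_of_integral_eq_one hpgint
  have ha : Integrable (fun x => πp * pp x) μ :=
    (integrable_of_integral_eq_one hppint).const_mul _
  have hb : Integrable (fun x => (1 - πp) * pn x + pg x) μ := hpn.add hpg
  have ha₀ : 0 ≤ᵐ[μ] fun x => πp * pp x := by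
    filter_upwards [hpp0] with x hx using mul_nonneg hπ.1 hx
  have hb₀ : 0 ≤ᵐ[μ] fun x => (1 - πp) * pn x + pg x := by
    filter_upwards [hpn0, hpg0] with x hnx hgx
    exact add_nonneg (mul_nonneg (sub_nonneg.2 hπ.2) hnx) hgx
  have hamass : ∫ x, πp * pp x ∂μ = πp := by rw [integral_const_mul, hppint, mul_one]
  have hbmass : ∫ x, ((1 - πp) * pn x + pg x) ∂μ = 2 - πp := by
    rw [integral_add hpn hpg, integral_const_mul, hpnint, hpgint]
    ring
  have hbound := neg_mul_binEntropy_le_integral_mul_log_add ha hb ha₀ hb₀ (by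
    rw [hamass, hbmass]; norm_num)
  rw [hamass, hbmass, add_sub_cancel, ← neg_mul] at hbound
  subst hpu hDstar
  simp only [add_assoc]
  exact ⟨integrable_mul_log_add_mul_log_one_sub ha hb ha₀ hb₀, hbound⟩

theorem minimax_value_lower_bound {X : Type*} [MeasurableSpace X] (μ : Measure X)
    (πp : ℝ) (hπ0 : 0 < πp) (hπ1 : πp < 1)
    (pp pn pg : X → ℝ)
    (hppm : Measurable pp) (hpnm : Measurable pn) (hpgm : Measurable pg)
    (hpp0 : ∀ x, 0 ≤ pp x) (hpn0 : ∀ x, 0 ≤ pn x) (hpg0 : ∀ x, 0 ≤ pg x)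
    (hppint : ∫ x, pp x ∂μ = 1) (hpnint : ∫ x, pn x ∂μ = 1) (hpgint : ∫ x, pg x ∂μ = 1)
    (hae : ∀ᵐ x ∂μ, 0 < pp x ∧ 0 < (1 - πp) * pn x + pg x)
    (pu : X → ℝ) (hpu : pu = fun x => πp * pp x + (1 - πp) * pn x)
    (Dstar : X → ℝ) (hDstar : Dstar = fun x => πp * pp x / (pu x + pg x))
    (hint1 : Integrable (fun x =>
      pp x * Real.log (pp x / ((pu x + pg x) / 2))) μ)
    (hint2 : Integrable (fun x =>
      (((1 - πp) * pn x + pg x) / (2 - πp)) *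
        Real.log ((((1 - πp) * pn x + pg x) / (2 - πp)) / ((pu x + pg x) / 2))) μ) :
    ∫ x, (πp * pp x * Real.log (Dstar x) +
        ((1 - πp) * pn x + pg x) * Real.log (1 - Dstar x)) ∂μ ≥
      -2 * Real.binEntropy (πp / 2) := by
  exact (minimax_value_lower_bound_general ⟨hπ0.le, hπ1.le⟩ (.of_forall hpp0) (.of_forall hpn0)
    (.of_forall hpg0) hppint hpnint hpgint hpu hDstar).2
end
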